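/- Let V be a nonempty Gotzmann set of monomials of degree d in K[x_1,…,x_n], and suppose that for some i ∈ {1, …, n} one has |D_i(V)| = |V|_{<<n−1>>}. Then \overline{M_i} D_i(V) = MV \setminus x_iV. -/

import Mathlib

/-!
The inclusion `shadExcept i (D_i V) ⊆ MV \ x_i V` is immediate: elements on the left have the
smallest possible `x_i`-exponent. Hence it suffices to compare cardinalities. The right side has
`|V|^{<n-1>} - |V|` elements, which equals `(|V|_{<<n-1>>})^{<n-2>}` by Pascal's rule
(`macUp_eq_add`), and the left side has at least `|D_i V|^{<n-2>}` elements by Macaulay's lower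
bound in `n - 1` variables (`macUp_le_card_varShad`).

Macaulay's bound is proved for an arbitrary finite set of exponent vectors and the multiples by a
set `S` of variables. Fix `x ∈ S` and write `V = V₀ ⊔ x W`, where `V₀` consists of the monomials
not divisible by `x`. Then `S V` contains the disjoint union of `(S \ x) V₀` and
`x (V₀ ∪ S W)`, and `V₀ ∪ S W` contains `V₀ ⊔ x W`. By induction, with `F_n = macUp n`,
`a = |V₀|`, `b = |W|`, the bound reduces to the numerical inequality
`F_{n+1}(a + b) ≤ F_n(a) + max (a + b) (F_{n+1}(b))` (`macUp_add_le_max`).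

That inequality rests on the block structure of `F_{n+1}`: with `N_n(k) = C(n+k, n)`, one has
`F_{n+1}(N_{n+1}(k) + r) = N_{n+1}(k+1) + F_n(r)` for `r ≤ N_n(k+1)`, so the increments of
`F_{n+1}` consist of consecutive blocks, each of which is an initial segment of the increments of
`F_n`. From this it follows by induction that among all windows of increments of a given length,
the initial one has the largest sum (subadditivity), and among those inside `[0, N_n(k))` the
final one has the smallest sum.
-/

open Finset

/-- `macUp n h` is `h^{<n>}`, computed via the greedy (Macaulay) binomial
representation `h = C(a_n, n) + C(a_{n-1}, n-1) + ⋯` (equivalently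
`h = C(h(n)+n, n) + ⋯ + C(h(i)+i, i)` with `h(n) ≥ ⋯ ≥ h(i) ≥ 0`), giving
`h^{<n>} = C(a_n+1, n) + C(a_{n-1}+1, n-1) + ⋯`; `macUp n 0 = 0`, `macUp 0 1 = 1`. -/
def macUp : ℕ → ℕ → ℕ
  | 0, h => h
  | n+1, h =>
    if h = 0 then 0
    else
      let a := Nat.findGreatest (fun a => Nat.choose a (n+1) ≤ h) (h + n + 1)
      Nat.choose (a+1) (n+1) + macUp n (h - Nat.choose a (n+1))
/-- `macDDown n h` is `h_{<<n>>} = C(a_n-1, n-1) + C(a_{n-1}-1, n-2) + ⋯` where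
`h = C(a_n, n) + C(a_{n-1}, n-1) + ⋯` is the `n`th binomial representation;
`macDDown n 0 = 0` and `macDDown 0 1 = 1`. -/
def macDDown : ℕ → ℕ → ℕ
  | 0, h => h
  | n+1, h =>
    if h = 0 then 0
    else
      let a := Nat.findGreatest (fun a => Nat.choose a (n+1) ≤ h) (h + n + 1)
      Nat.choose (a-1) n + macDDown n (h - Nat.choose a (n+1))
/-- Monomials in `K[x_1,…,x_n]` are identified with their exponent vectors
`Fin n → ℕ`; the degree of `v` is `∑ i, v i`.  `shad V` is the set
`MV = {x_j v : v ∈ V, 1 ≤ j ≤ n}`. -/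
def shad {n : ℕ} (V : Finset (Fin n → ℕ)) : Finset (Fin n → ℕ) :=
  (Finset.univ ×ˢ V).image fun p => p.2 + Pi.single p.1 1
/-- `mulVar i V` is `x_i V = {x_i v : v ∈ V}`. -/
def mulVar {n : ℕ} (i : Fin n) (V : Finset (Fin n → ℕ)) : Finset (Fin n → ℕ) :=
  V.image fun v => v + Pi.single i 1
/-- `shadExcept i W` is `\overline{M_i} W = {x_j w : w ∈ W, j ≠ i}`. -/
def shadExcept {n : ℕ} (i : Fin n) (W : Finset (Fin n → ℕ)) : Finset (Fin n → ℕ) :=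
  ((Finset.univ.erase i) ×ˢ W).image fun p => p.2 + Pi.single p.1 1
/-- `gcd(V)` of a set of monomials: the exponentwise minimum. -/
noncomputable def gcdMon {n : ℕ} (V : Finset (Fin n → ℕ)) : Fin n → ℕ :=
  fun i => sInf ((fun v => v i) '' (V : Set (Fin n → ℕ)))
open Classical in
/-- `K_i(V)`: for `|V| ≤ 1` it is `V`; otherwise the set of monomials of `V`
divisible by `x_i · gcd(V)`. -/
noncomputable def Kset {n : ℕ} (V : Finset (Fin n → ℕ)) (i : Fin n) : Finset (Fin n → ℕ) :=
  if V.card ≤ 1 then V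
  else V.filter fun v => ∀ j, gcdMon V j + (Pi.single i 1 : Fin n → ℕ) j ≤ v j

/-- `D_i(V) = V \ K_i(V)`. -/
noncomputable def Dset {n : ℕ} (V : Finset (Fin n → ℕ)) (i : Fin n) : Finset (Fin n → ℕ) :=
  V \ Kset V i

/-! ### Binomial blocks and the recursion for `macUp`, `macDDown` -/

/-- The number of monomials of degree `k` in `n + 1` variables. -/
def monCount (n k : ℕ) : ℕ := (n + k).choose n

lemma monCount_zero_left (k : ℕ) : monCount 0 k = 1 := by simp [monCount]

lemma monCount_zero_right (n : ℕ) : monCount n 0 = 1 := by simp [monCount]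

lemma monCount_succ (n k : ℕ) :
    monCount (n + 1) (k + 1) = monCount (n + 1) k + monCount n (k + 1) := by
  unfold monCount
  rw [show n + 1 + (k + 1) = (n + k + 1) + 1 by ring, Nat.choose_succ_succ,
    show n + 1 + k = n + k + 1 by ring, show n + (k + 1) = n + k + 1 by ring]
  ring

lemma monCount_pos (n k : ℕ) : 0 < monCount n k := Nat.choose_pos (by omega)

lemma monCount_mono (n : ℕ) : Monotone (monCount n) := by
  intro a b h
  exact Nat.choose_le_choose n (by omega)

lemma monCount_le_succ_left (n k : ℕ) : monCount n k ≤ monCount (n + 1) k := by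
  cases k with
  | zero => simp [monCount_zero_right]
  | succ k => rw [monCount_succ]; omega

lemma lt_monCount_succ (n k : ℕ) : k < monCount (n + 1) k := by
  induction k with
  | zero => exact monCount_pos _ _
  | succ k ih => rw [monCount_succ]; have := monCount_pos n (k + 1); omega

/-- Every positive integer lies in a unique block `[N_{n+1}(k), N_{n+1}(k+1))`. -/
lemma exists_block (n h : ℕ) (hh : 0 < h) :
    ∃ k r, h = monCount (n + 1) k + r ∧ r < monCount n (k + 1) := by
  induction h with
  | zero => omega
  | succ h ih =>
    rcases Nat.eq_zero_or_pos h with rfl | hp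
    · exact ⟨0, 0, by simp [monCount_zero_right], monCount_pos _ _⟩
    · obtain ⟨k, r, hk, hr⟩ := ih hp
      by_cases h1 : r + 1 < monCount n (k + 1)
      · exact ⟨k, r + 1, by omega, h1⟩
      · exact ⟨k + 1, 0, by rw [monCount_succ]; omega, monCount_pos _ _⟩

lemma findGreatest_block (n k r : ℕ) (hr : r < monCount n (k + 1)) :
    Nat.findGreatest (fun a => Nat.choose a (n + 1) ≤ monCount (n + 1) k + r)
      (monCount (n + 1) k + r + n + 1) = n + 1 + k := by
  rw [Nat.findGreatest_eq_iff]
  refine ⟨?_, fun _ => ?_, fun m hm _ hle => ?_⟩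
  · have := lt_monCount_succ n k
    omega
  · simp [monCount]
  · have h1 : monCount (n + 1) (k + 1) ≤ m.choose (n + 1) :=
      Nat.choose_le_choose _ (by omega)
    rw [monCount_succ] at h1
    omega

lemma macUp_zero (n : ℕ) : macUp n 0 = 0 := by cases n <;> simp [macUp]

lemma macDDown_zero (n : ℕ) : macDDown n 0 = 0 := by cases n <;> simp [macDDown]

lemma macUp_block_lt (n k r : ℕ) (hr : r < monCount n (k + 1)) :
    macUp (n + 1) (monCount (n + 1) k + r) = monCount (n + 1) (k + 1) + macUp n r := by
  have hp := monCount_pos (n + 1) k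
  rw [macUp, if_neg (by omega)]
  simp only [findGreatest_block n k r hr]
  congr 2
  simp [monCount]

lemma macDDown_block (n k r : ℕ) (hr : r < monCount n (k + 1)) :
    macDDown (n + 1) (monCount (n + 1) k + r) = monCount n k + macDDown n r := by
  have hp := monCount_pos (n + 1) k
  rw [macDDown, if_neg (by omega)]
  simp only [findGreatest_block n k r hr]
  congr 2
  · omega
  · simp [monCount]

lemma macUp_monCount (n k : ℕ) : macUp n (monCount n k) = monCount n (k + 1) := by
  cases n with
  | zero => simp [macUp, monCount_zero_left]
  | succ n =>
    have := macUp_block_lt n k 0 (monCount_pos _ _)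
    simpa [macUp_zero] using this

/-- The block recursion also holds at the right end of a block, where the argument already
belongs to the next block. -/
lemma macUp_block (n k r : ℕ) (hr : r ≤ monCount n (k + 1)) :
    macUp (n + 1) (monCount (n + 1) k + r) = monCount (n + 1) (k + 1) + macUp n r := by
  rcases hr.lt_or_eq with h | rfl
  · exact macUp_block_lt n k r h
  · rw [← monCount_succ, macUp_monCount, macUp_monCount, monCount_succ n (k + 1)]

lemma macUp_mono (n : ℕ) : Monotone (macUp n) := by
  induction n with
  | zero => intro a b h; simpa [macUp] using h
  | succ n ih =>
    refine monotone_nat_of_le_succ fun h => ?_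
    rcases Nat.eq_zero_or_pos h with rfl | hp
    · simp [macUp_zero]
    · obtain ⟨k, r, rfl, hr⟩ := exists_block n h hp
      rw [add_assoc, macUp_block n k r hr.le, macUp_block n k (r + 1) hr]
      have := ih (Nat.le_succ r)
      simp only [Nat.succ_eq_add_one] at this
      omega

lemma macDDown_le_self (n h : ℕ) : macDDown n h ≤ h := by
  induction n generalizing h with
  | zero => simp [macDDown]
  | succ n ih =>
    rcases Nat.eq_zero_or_pos h with rfl | hp
    · simp [macDDown_zero]
    · obtain ⟨k, r, rfl, hr⟩ := exists_block n h hp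
      rw [macDDown_block n k r hr]
      have := ih r
      have := monCount_le_succ_left n k
      omega

lemma macDDown_one (h : ℕ) : macDDown 1 h ≤ 1 := by
  rcases Nat.eq_zero_or_pos h with rfl | hp
  · simp [macDDown_zero]
  · obtain ⟨k, r, rfl, hr⟩ := exists_block 0 h hp
    rw [macDDown_block 0 k r hr]
    simp only [monCount_zero_left] at *
    have := macDDown_le_self 0 r
    omega

lemma macDDown_le (n k r : ℕ) (hr : r < monCount (n + 1) k) :
    macDDown (n + 1) r ≤ monCount n k := by
  induction n generalizing k r with
  | zero => simpa [monCount_zero_left] using macDDown_one r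
  | succ n ih =>
    rcases Nat.eq_zero_or_pos r with rfl | hp
    · simp [macDDown_zero]
    · obtain ⟨j, s, rfl, hs⟩ := exists_block (n + 1) r hp
      rw [macDDown_block _ j s hs]
      have h1 := ih _ _ hs
      have h2 : j + 1 ≤ k := by
        by_contra hc
        have := monCount_mono (n + 1 + 1) (show k ≤ j by omega)
        omega
      have h3 := monCount_mono (n + 1) h2
      rw [monCount_succ] at h3
      omega

/-- `h^{<n+1>} = h + (h_{<<n+1>>})^{<n>}`. -/
lemma macUp_eq_add (n h : ℕ) :
    macUp (n + 1) h = h + macUp n (macDDown (n + 1) h) := by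
  induction n generalizing h with
  | zero =>
    rcases Nat.eq_zero_or_pos h with rfl | hp
    · simp [macUp_zero, macDDown_zero]
    · obtain ⟨k, r, rfl, hr⟩ := exists_block 0 h hp
      rw [macDDown_block 0 k r hr, macUp_block_lt 0 k r hr, monCount_succ]
      simp only [monCount_zero_left] at *
      obtain rfl : r = 0 := by omega
      simp [macUp, macDDown]
  | succ n ih =>
    rcases Nat.eq_zero_or_pos h with rfl | hp
    · simp [macUp_zero, macDDown_zero]
    · obtain ⟨k, r, rfl, hr⟩ := exists_block (n + 1) h hp
      rw [macDDown_block _ k r hr, macUp_block_lt _ k r hr,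
        macUp_block n k _ (macDDown_le n _ r hr), ih r, monCount_succ (n + 1) k]
      ring

/-! ### Windows of increments of `macUp` -/

/-- The part of `macUp n ≤ macUp (n + 1)` at block ends, for subadditive `macUp n`. -/
lemma macUp_monCount_succ_le (n k : ℕ)
    (hA : ∀ a b, macUp n (a + b) ≤ macUp n a + macUp n b) :
    macUp n (monCount (n + 1) k) ≤ monCount (n + 1) (k + 1) := by
  induction k with
  | zero =>
    have h1 := macUp_monCount n 0
    rw [monCount_zero_right] at h1
    rw [monCount_zero_right, h1]
    exact monCount_le_succ_left n _
  | succ k ih =>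
    rw [monCount_succ n k, monCount_succ n (k + 1)]
    refine (hA _ _).trans ?_
    rw [macUp_monCount n]
    omega

lemma macUp_le_succ_of_subadd (n h : ℕ)
    (hA : ∀ a b, macUp n (a + b) ≤ macUp n a + macUp n b) :
    macUp n h ≤ macUp (n + 1) h := by
  rcases Nat.eq_zero_or_pos h with rfl | hp
  · simp [macUp_zero]
  · obtain ⟨k, r, rfl, hr⟩ := exists_block n h hp
    rw [macUp_block n k r hr.le]
    have := hA (monCount (n + 1) k) r
    have := macUp_monCount_succ_le n k hA
    omega

/-- The final window `[t, t + L)` of a block of increments of `macUp (n + 1)` (which is an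
initial segment of increments of `macUp n`) has at most the sum of any window `[r, r + L)` of
increments of `macUp (n + 1)` that does not extend beyond this block. -/
lemma macUp_block_window (n : ℕ)
    (hA : ∀ a b, macUp n (a + b) ≤ macUp n a + macUp n b)
    (hB : ∀ k r L t, t + L = monCount n k → r + L ≤ monCount n k →
      macUp n (t + L) + macUp n r ≤ macUp n (r + L) + macUp n t)
    (L k r t : ℕ) (ht : t + L = monCount n k) (hr : r + L ≤ monCount (n + 1) k) :
    macUp n (t + L) + macUp (n + 1) r ≤ macUp (n + 1) (r + L) + macUp n t := by
  induction L using Nat.strong_induction_on generalizing r t with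
  | _ L ih =>
  rcases Nat.eq_zero_or_pos L with rfl | hL
  · simp only [add_zero]; omega
  by_cases h1 : r + L = 1
  · obtain rfl : r = 0 := by omega
    obtain rfl : L = 1 := by omega
    have := hA t 1
    have := macUp_le_succ_of_subadd n 1 hA
    simp only [macUp_zero, zero_add]
    omega
  -- Shifting by one gives a representation of `r + L` whose remainder `s` is positive.
  obtain ⟨j, s, hj, hs⟩ := exists_block n (r + L - 1) (by omega)
  obtain ⟨s, rfl⟩ : ∃ s', s' = s + 1 := ⟨_, rfl⟩
  have hjk : j + 1 ≤ k := by
    by_contra hc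
    have := monCount_mono (n + 1) (show k ≤ j by omega)
    omega
  have hq := monCount_mono n hjk
  have hrL : r + L = monCount (n + 1) j + (s + 1) := by omega
  rw [hrL, macUp_block n j (s + 1) hs]
  by_cases hsL : L ≤ s + 1
  · have hr' : r = monCount (n + 1) j + (s + 1 - L) := by omega
    have h2 := hB k (s + 1 - L) L t ht (by omega)
    rw [hr', macUp_block n j _ (by omega)]
    rw [Nat.sub_add_cancel hsL] at h2
    omega
  · have h3 := ih (L - (s + 1)) (by omega) r (t + (s + 1)) (by omega) (by omega)
    rw [show t + (s + 1) + (L - (s + 1)) = t + L by omega,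
      show r + (L - (s + 1)) = monCount (n + 1) j by omega, macUp_monCount] at h3
    have := hA t (s + 1)
    omega

/-- `macUp n` is subadditive, and among the windows of increments of fixed length in
`[0, N_n(k))`, the final one has the smallest sum. -/
lemma macUp_windows (n : ℕ) :
    (∀ a b, macUp n (a + b) ≤ macUp n a + macUp n b) ∧
    (∀ k r L t, t + L = monCount n k → r + L ≤ monCount n k →
      macUp n (t + L) + macUp n r ≤ macUp n (r + L) + macUp n t) := by
  induction n with
  | zero =>
    constructor
    · intro a b; simp [macUp]
    · intro k r L t _ _; simp only [macUp]; omega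
  | succ n ih =>
    obtain ⟨hA, hB⟩ := ih
    have hB1 := macUp_block_window n hA hB
    have hB' : ∀ k r L t, t + L = monCount (n + 1) k → r + L ≤ monCount (n + 1) k →
        macUp (n + 1) (t + L) + macUp (n + 1) r ≤
          macUp (n + 1) (r + L) + macUp (n + 1) t := by
      intro k
      induction k with
      | zero =>
        intro r L t ht hr
        rw [monCount_zero_right] at ht hr
        rcases Nat.eq_zero_or_pos L with rfl | hL
        · simp only [add_zero]; omega
        · obtain rfl : r = 0 := by omega
          obtain rfl : t = 0 := by omega
          omega
      | succ k ihk =>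
        intro r L t ht hr
        have hN := monCount_succ n k
        by_cases hL : L ≤ monCount n (k + 1)
        · have h1 := hB1 L (k + 1) r (monCount n (k + 1) - L) (by omega) hr
          rw [Nat.sub_add_cancel hL] at h1
          have e : t = monCount (n + 1) k + (monCount n (k + 1) - L) := by omega
          have h2 := macUp_block n k (monCount n (k + 1)) le_rfl
          have h3 := macUp_block n k (monCount n (k + 1) - L) (by omega)
          rw [← hN] at h2
          rw [← e] at h3
          rw [ht]
          omega
        · obtain ⟨L', rfl⟩ : ∃ L', L = L' + monCount n (k + 1) :=
            ⟨L - monCount n (k + 1), by omega⟩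
          have h1 := ihk r L' t (by omega) (by omega)
          have h2 := hB1 (monCount n (k + 1)) (k + 1) (r + L') 0 (by omega) (by omega)
          have h3 := macUp_block n k (monCount n (k + 1)) le_rfl
          rw [show t + L' = monCount (n + 1) k by omega, macUp_monCount] at h1
          rw [← hN] at h3
          rw [ht]
          rw [zero_add, macUp_zero, add_assoc r] at h2
          omega
    refine ⟨?_, hB'⟩
    have key : ∀ a b, a ≤ b →
        macUp (n + 1) (a + b) ≤ macUp (n + 1) a + macUp (n + 1) b := by
      intro a b hab
      rcases Nat.eq_zero_or_pos (a + b) with h0 | hp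
      · rw [h0, macUp_zero]; omega
      obtain ⟨k, r, hk, hr⟩ := exists_block n (a + b) hp
      have h1 := macUp_block n k r hr.le
      rw [hk, h1]
      by_cases har : a ≤ r
      · have h2 := macUp_block n k (r - a) (by omega)
        rw [show monCount (n + 1) k + (r - a) = b by omega] at h2
        have h3 := hA (r - a) a
        rw [Nat.sub_add_cancel har] at h3
        have := macUp_le_succ_of_subadd n a hA
        omega
      · have h2 := hB' k r (a - r) b (by omega) (by omega)
        rw [show b + (a - r) = monCount (n + 1) k by omega, macUp_monCount,
          show r + (a - r) = a by omega] at h2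
        have := macUp_le_succ_of_subadd n r hA
        omega
    intro a b
    rcases le_total a b with h | h
    · exact key a b h
    · rw [add_comm a b, add_comm (macUp _ a)]; exact key b a h

/-- A window of increments of `macUp (n + 1)` ending at `a + b` and of length
`a < (a + b)_{<<n+1>>}` has at most the sum of the initial window of increments of `macUp n`. -/
lemma macUp_add_le_of_lt (n a b : ℕ) (h : a < macDDown (n + 1) (a + b)) :
    macUp (n + 1) (a + b) ≤ macUp (n + 1) b + macUp n a := by
  induction n generalizing a b with
  | zero =>
    have := macDDown_one (a + b)
    rw [zero_add] at h
    obtain rfl : a = 0 := by omega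
    simp
  | succ n ih =>
    rcases Nat.eq_zero_or_pos (a + b) with h0 | hp
    · rw [h0, macUp_zero]; omega
    obtain ⟨k, r, hk, hr⟩ := exists_block (n + 1) (a + b) hp
    rw [hk, macDDown_block _ k r hr] at h
    obtain ⟨hA, hB⟩ := macUp_windows (n + 1)
    have hDr := macDDown_le_self (n + 1) r
    have h1 := macUp_block _ k r hr.le
    rw [← hk] at h1
    rw [h1]
    by_cases har : a ≤ r
    · have h2 := macUp_block (n + 1) k (r - a) (by omega)
      rw [show monCount (n + 1 + 1) k + (r - a) = b by omega] at h2
      have h3 := hA (r - a) a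
      rw [Nat.sub_add_cancel har] at h3
      omega
    -- Otherwise the window consists of the first `r` increments of block `k` and the last
    -- `a - r` increments of block `k - 1`.
    cases k with
    | zero => rw [monCount_zero_right] at h; omega
    | succ k =>
      have hN := monCount_succ (n + 1) k
      have hN' := monCount_succ (n + 1) (k + 1)
      have hb := macUp_block (n + 1) k (monCount (n + 1) (k + 1) + r - a) (by omega)
      rw [show monCount (n + 1 + 1) k + (monCount (n + 1) (k + 1) + r - a) = b by omega] at hb
      have hp' := macUp_monCount (n + 1) (k + 1)
      by_cases hap : a ≤ monCount (n + 1) (k + 1)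
      · have h2 := hB (k + 1) r (monCount (n + 1) (k + 1) - a) a (by omega) (by omega)
        rw [show a + (monCount (n + 1) (k + 1) - a) = monCount (n + 1) (k + 1) by omega,
          show r + (monCount (n + 1) (k + 1) - a) = monCount (n + 1) (k + 1) + r - a
            by omega] at h2
        omega
      · obtain ⟨L, rfl⟩ : ∃ L, a = monCount (n + 1) (k + 1) + L := ⟨_, by
          rw [Nat.add_sub_cancel' (le_of_not_ge hap)]⟩
        have hDb := macDDown_le n _ r hr
        have h2 := ih L (r - L) (by rw [show L + (r - L) = r by omega]; omega)
        rw [show L + (r - L) = r by omega] at h2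
        have h3 := macUp_block n (k + 1) L (by omega)
        rw [show monCount (n + 1) (k + 1) + r - (monCount (n + 1) (k + 1) + L) = r - L
          by omega] at hb
        omega

/-- The numerical inequality behind Macaulay's bound. -/
lemma macUp_add_le_max (n a b : ℕ) :
    macUp (n + 1) (a + b) ≤ macUp n a + max (a + b) (macUp (n + 1) b) := by
  rcases lt_or_ge a (macDDown (n + 1) (a + b)) with h | h
  · have := macUp_add_le_of_lt n a b h
    have := le_max_right (a + b) (macUp (n + 1) b)
    omega
  · have h1 := macUp_eq_add n (a + b)
    have := macUp_mono n h
    have := le_max_left (a + b) (macUp (n + 1) b)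
    omega

/-! ### Macaulay's lower bound -/

/-- The set of products `x_j v` with `j ∈ S` and `v ∈ V`. -/
def varShad {m : ℕ} (S : Finset (Fin m)) (V : Finset (Fin m → ℕ)) : Finset (Fin m → ℕ) :=
  (S ×ˢ V).image fun p => p.2 + Pi.single p.1 1

lemma mem_varShad {m : ℕ} {S : Finset (Fin m)} {V : Finset (Fin m → ℕ)} {w : Fin m → ℕ} :
    w ∈ varShad S V ↔ ∃ j ∈ S, ∃ v ∈ V, v + Pi.single j 1 = w := by
  simp only [varShad, mem_image, mem_product, Prod.exists]
  constructor
  · rintro ⟨j, v, ⟨hj, hv⟩, rfl⟩; exact ⟨j, hj, v, hv, rfl⟩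
  · rintro ⟨j, hj, v, hv, rfl⟩; exact ⟨j, v, ⟨hj, hv⟩, rfl⟩

lemma mem_mulVar {m : ℕ} {i : Fin m} {V : Finset (Fin m → ℕ)} {w : Fin m → ℕ} :
    w ∈ mulVar i V ↔ ∃ v ∈ V, v + Pi.single i 1 = w := by
  simp [mulVar]

lemma card_mulVar {m : ℕ} (i : Fin m) (V : Finset (Fin m → ℕ)) :
    (mulVar i V).card = V.card :=
  card_image_of_injective _ fun _ _ h => add_right_cancel h

/-- Macaulay's lower bound for multiplication by `n + 1` variables. Neither homogeneity nor a
condition on the variables occurring in `V` is required. -/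
lemma macUp_le_card_varShad {m : ℕ} (n : ℕ) (S : Finset (Fin m)) (hS : S.card = n + 1)
    (V : Finset (Fin m → ℕ)) : macUp n V.card ≤ (varShad S V).card := by
  induction n generalizing S V with
  | zero =>
    obtain ⟨x, rfl⟩ := card_eq_one.mp hS
    rw [macUp, ← card_mulVar x V]
    refine card_le_card fun w hw => ?_
    obtain ⟨v, hv, rfl⟩ := mem_mulVar.mp hw
    exact mem_varShad.mpr ⟨x, mem_singleton_self x, v, hv, rfl⟩
  | succ n ihn =>
    obtain ⟨x, hx⟩ : S.Nonempty := card_pos.mp (by omega)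
    -- Induction on a bound for the exponents of `x`.
    suffices H : ∀ N : ℕ, ∀ V : Finset (Fin m → ℕ), (∀ v ∈ V, v x < N) →
        macUp (n + 1) V.card ≤ (varShad S V).card from
      H (V.sup (fun v => v x) + 1) V fun v hv =>
        Nat.lt_succ_of_le (le_sup (f := fun v : Fin m → ℕ => v x) hv)
    intro N
    induction N with
    | zero =>
      intro V hV
      obtain rfl : V = ∅ := eq_empty_of_forall_notMem fun v hv => by simpa using hV v hv
      simp [macUp_zero]
    | succ N ihN =>
      intro V hV
      set V₀ := V.filter fun v => v x = 0 with hV₀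
      set W := (V.filter fun v => v x ≠ 0).image fun v => v - Pi.single x 1 with hW
      have hcancel : ∀ v : Fin m → ℕ, v x ≠ 0 → v - Pi.single x 1 + Pi.single x 1 = v := by
        intro v hv
        refine tsub_add_cancel_of_le fun j => ?_
        rcases eq_or_ne j x with rfl | hj
        · simpa using Nat.one_le_iff_ne_zero.mpr hv
        · simp [hj]
      have hWV : ∀ w ∈ W, w + Pi.single x 1 ∈ V := by
        intro w hw
        obtain ⟨v, hv, rfl⟩ := mem_image.mp hw
        rw [mem_filter] at hv
        rw [hcancel v hv.2]; exact hv.1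
      have hxW : mulVar x W = V.filter fun v => v x ≠ 0 := by
        ext v
        rw [mem_mulVar]
        constructor
        · rintro ⟨w, hw, rfl⟩
          exact mem_filter.mpr ⟨hWV w hw, by simp⟩
        · intro hv
          exact ⟨_, mem_image_of_mem _ hv, hcancel v (mem_filter.mp hv).2⟩
      have hcard : V.card = V₀.card + W.card := by
        rw [← card_mulVar x W, hxW, hV₀, card_filter_add_card_filter_not]
      have hWN : macUp (n + 1) W.card ≤ (varShad S W).card := by
        refine ihN W fun w hw => ?_
        have := hV _ (hWV w hw)
        simpa using this
      have h₀ := ihn (S.erase x) (by rw [card_erase_of_mem hx]; omega) V₀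
      have hdisj : Disjoint (varShad (S.erase x) V₀) (mulVar x (V₀ ∪ varShad S W)) := by
        rw [disjoint_left]
        intro w hw hw'
        obtain ⟨j, hj, v, hv, rfl⟩ := mem_varShad.mp hw
        obtain ⟨u, -, hu⟩ := mem_mulVar.mp hw'
        have h1 := congrFun hu x
        have h2 : v x = 0 := (mem_filter.mp hv).2
        simp [(ne_of_mem_erase hj).symm, h2] at h1
      have hsub : varShad (S.erase x) V₀ ∪ mulVar x (V₀ ∪ varShad S W) ⊆ varShad S V := by
        intro w hw
        rcases mem_union.mp hw with hw | hw
        · obtain ⟨j, hj, v, hv, rfl⟩ := mem_varShad.mp hw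
          exact mem_varShad.mpr ⟨j, mem_of_mem_erase hj, v, (mem_filter.mp hv).1, rfl⟩
        · obtain ⟨u, hu, rfl⟩ := mem_mulVar.mp hw
          rcases mem_union.mp hu with hu | hu
          · exact mem_varShad.mpr ⟨x, hx, u, (mem_filter.mp hu).1, rfl⟩
          · obtain ⟨j, hj, v, hv, rfl⟩ := mem_varShad.mp hu
            exact mem_varShad.mpr ⟨j, hj, _, hWV v hv, add_right_comm _ _ _⟩
      have hV_sub : V ⊆ V₀ ∪ varShad S W := by
        intro v hv
        by_cases h : v x = 0
        · exact mem_union_left _ (mem_filter.mpr ⟨hv, h⟩)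
        · refine mem_union_right _ (mem_varShad.mpr ⟨x, hx, ?_⟩)
          exact mem_mulVar.mp (hxW ▸ mem_filter.mpr ⟨hv, h⟩)
      have h1 := card_le_card hsub
      rw [card_union_of_disjoint hdisj, card_mulVar] at h1
      have h2 := card_le_card hV_sub
      have h3 := card_le_card (subset_union_right (s₁ := V₀) (s₂ := varShad S W))
      have h4 := macUp_add_le_max n V₀.card W.card
      have h5 : max (V₀.card + W.card) (macUp (n + 1) W.card) ≤ (V₀ ∪ varShad S W).card :=
        max_le (by omega) (by omega)
      rw [← hcard] at h4 h5
      omega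

/-! ### The structure of `D_i(V)` -/

lemma gcdMon_le {n : ℕ} {V : Finset (Fin n → ℕ)} {v : Fin n → ℕ} (hv : v ∈ V) (j : Fin n) :
    gcdMon V j ≤ v j :=
  Nat.sInf_le ⟨v, hv, rfl⟩

lemma apply_eq_of_mem_Dset {n : ℕ} {V : Finset (Fin n → ℕ)} {i : Fin n} {w : Fin n → ℕ}
    (hw : w ∈ Dset V i) : w i = gcdMon V i := by
  rw [Dset, mem_sdiff, Kset] at hw
  obtain ⟨hwV, hK⟩ := hw
  split_ifs at hK with hc
  · exact absurd hwV hK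
  · rw [mem_filter, not_and] at hK
    refine le_antisymm ?_ (gcdMon_le hwV i)
    by_contra hlt
    refine hK hwV fun j => ?_
    rcases eq_or_ne j i with rfl | hj
    · simp only [Pi.single_eq_same]; omega
    · simpa [hj] using gcdMon_le hwV j

/-- If `V` is a nonempty Gotzmann set of monomials of degree `d` in
`K[x_1,…,x_n]` and `|D_i(V)| = |V|_{<<n-1>>}` for some `i`, then
`\overline{M_i} D_i(V) = MV \ x_i V`. -/
theorem shadExcept_Dset_eq {n d : ℕ} (hn : 0 < n) (V : Finset (Fin n → ℕ)) (hne : V.Nonempty)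
    (hdeg : ∀ v ∈ V, ∑ i, v i = d)
    (hG : (shad V).card = macUp (n - 1) V.card) (i : Fin n)
    (hD : (Dset V i).card = macDDown (n - 1) V.card) :
    shadExcept i (Dset V i) = shad V \ mulVar i V := by
  have hsub : shadExcept i (Dset V i) ⊆ shad V \ mulVar i V := by
    intro w hw
    obtain ⟨j, hj, v, hv, rfl⟩ := mem_varShad.mp (show w ∈ varShad _ _ from hw)
    refine mem_sdiff.mpr
      ⟨mem_varShad.mpr ⟨j, mem_univ j, v, (mem_sdiff.mp hv).1, rfl⟩, fun hmul => ?_⟩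
    obtain ⟨u, hu, he⟩ := mem_mulVar.mp hmul
    have h1 := congrFun he i
    have h2 := gcdMon_le hu i
    have h3 := apply_eq_of_mem_Dset hv
    simp [(ne_of_mem_erase hj).symm] at h1
    omega
  refine eq_of_subset_of_card_le hsub ?_
  have hmul : mulVar i V ⊆ shad V := by
    intro w hw
    obtain ⟨v, hv, rfl⟩ := mem_mulVar.mp hw
    exact mem_varShad.mpr ⟨i, mem_univ i, v, hv, rfl⟩
  rw [card_sdiff_of_subset hmul, card_mulVar, hG]
  obtain ⟨n, rfl⟩ : ∃ k, n = k + 1 := ⟨n - 1, by omega⟩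
  rw [Nat.add_sub_cancel] at hD ⊢
  cases n with
  | zero => simp [macUp]
  | succ n =>
    rw [macUp_eq_add, Nat.add_sub_cancel_left, ← hD]
    exact macUp_le_card_varShad n (univ.erase i) (by simp) _
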